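/- There exists an absolute constant C ≥ 1 such that for all t ∈ ℝ and all Schwartz functions f : ℝ → ℂ: ‖ ⟨·⟩^{-2} ∂_x e^{±it⟨∇⟩} ( ⟨·⟩^{-2} f ) ‖_{L²(ℝ)} ≤ C ⟨t⟩^{-3/2} ( ‖f‖_{L²(ℝ)}² + ‖f'‖_{L²(ℝ)}² )^{1/2}. -/

import Mathlib

open MeasureTheory

/-- Fourier transform with the convention `ĥ(ξ) = (2π)^{-1/2} ∫ e^{-ixξ} h(x) dx`. -/
noncomputable def FT (h : ℝ → ℂ) (ξ : ℝ) : ℂ :=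
  (Real.sqrt (2 * Real.pi) : ℂ)⁻¹ * ∫ x : ℝ, Complex.exp (-(Complex.I * x * ξ)) * h x

/-- Inverse Fourier transform `(2π)^{-1/2} ∫ e^{+ixξ} h(ξ) dξ`. -/
noncomputable def IFT (h : ℝ → ℂ) (x : ℝ) : ℂ :=
  (Real.sqrt (2 * Real.pi) : ℂ)⁻¹ * ∫ ξ : ℝ, Complex.exp (Complex.I * x * ξ) * h ξ

/-- Japanese bracket `⟨x⟩ = (1+x²)^{1/2}`. -/
noncomputable def jap (x : ℝ) : ℝ := Real.sqrt (1 + x ^ 2)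

/-- Fourier multiplier operator with symbol `m`: `m(D)h = ℱ^{-1}(m(ξ) ĥ(ξ))`. -/
noncomputable def Mop (m : ℝ → ℂ) (h : ℝ → ℂ) : ℝ → ℂ :=
  IFT (fun ξ => m ξ * FT h ξ)

/-- The `L²(ℝ)` norm. -/
noncomputable def L2C (h : ℝ → ℂ) : ℝ := Real.sqrt (∫ x : ℝ, ‖h x‖ ^ 2)


open scoped SchwartzMap FourierTransform ENNReal ContDiff

namespace KG

/-! ### Temperate growth -/

lemma jap_pos (x : ℝ) : 0 < jap x := Real.sqrt_pos.2 (by positivity)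

lemma jap_sq (x : ℝ) : jap x ^ 2 = 1 + x ^ 2 := Real.sq_sqrt (by positivity)

lemma one_le_jap (x : ℝ) : 1 ≤ jap x := by
  rw [jap]; exact Real.one_le_sqrt.2 (by nlinarith [sq_nonneg x])

lemma abs_le_jap (x : ℝ) : |x| ≤ jap x :=
  Real.abs_le_sqrt (by linarith)

lemma jap_le (x : ℝ) : jap x ≤ 1 + |x| := by
  rw [jap, Real.sqrt_le_left (by positivity)]
  nlinarith [sq_abs x, abs_nonneg x]

lemma hasDerivAt_jap (x : ℝ) : HasDerivAt jap (x / jap x) x := by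
  have h1 : HasDerivAt (fun y : ℝ => 1 + y ^ 2) (2 * x) x := by
    simpa using (hasDerivAt_pow 2 x).const_add 1
  have := h1.sqrt (by positivity)
  refine HasDerivAt.congr_deriv (f := jap) this ?_
  change _ = x / Real.sqrt (1 + x ^ 2)
  have := (jap_pos x).ne'
  rw [jap] at this
  field_simp

lemma tg_jap_real : jap.HasTemperateGrowth := by
  have h := Function.hasTemperateGrowth_one_add_norm_sq_rpow ℝ (1 / 2)
  have e : jap = fun x : ℝ => (1 + ‖x‖ ^ 2) ^ (1 / 2 : ℝ) := by
    ext x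
    rw [jap, Real.sqrt_eq_rpow]; simp
  rw [e]; exact h

lemma tg_ofReal {k : ℝ → ℝ} (hk : k.HasTemperateGrowth) :
    (fun x => (k x : ℂ)).HasTemperateGrowth :=
  Function.Complex.hasTemperateGrowth_ofReal.comp hk

lemma tg_jap : (fun x => (jap x : ℂ)).HasTemperateGrowth := tg_ofReal tg_jap_real

lemma tg_inv_real : (fun x : ℝ => (1 + x ^ 2)⁻¹).HasTemperateGrowth := by
  have h := Function.hasTemperateGrowth_one_add_norm_sq_rpow ℝ (-1)
  have e : (fun x : ℝ => (1 + x ^ 2)⁻¹) = fun x : ℝ => (1 + ‖x‖ ^ 2) ^ (-1 : ℝ) := by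
    ext x
    rw [Real.rpow_neg_one]; simp
  rw [e]; exact h

lemma tg_inv_eps {e : ℝ} (he : 0 < e) : (fun x : ℝ => (x ^ 2 + e ^ 2)⁻¹).HasTemperateGrowth := by
  have h1 : (fun x : ℝ => e⁻¹ * x).HasTemperateGrowth := by fun_prop
  have h := (tg_inv_real.comp h1)
  have h2 : (fun x : ℝ => (e ^ 2)⁻¹ * ((fun x : ℝ => (1 + x ^ 2)⁻¹) ∘ fun x : ℝ => e⁻¹ * x) x).HasTemperateGrowth :=
    (Function.HasTemperateGrowth.const _).mul h
  convert h2 using 2 with x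
  have := he.ne'
  simp only [Function.comp]
  rw [← mul_inv]
  congr 1
  field_simp
  ring

/-- the phase -/
noncomputable def ph (s : ℝ) (x : ℝ) : ℂ := Complex.exp (Complex.I * s * jap x)

lemma norm_ph (s x : ℝ) : ‖ph s x‖ = 1 := by
  have : Complex.I * s * jap x = ((s * jap x : ℝ) : ℂ) * Complex.I := by push_cast; ring
  rw [ph, this, Complex.norm_exp_ofReal_mul_I]

lemma tg_cexp (s : ℝ) : (fun x : ℝ => Complex.exp (Complex.I * s * x)).HasTemperateGrowth := by
  have hd : ∀ n : ℕ, iteratedDeriv n (fun x : ℝ => Complex.exp (Complex.I * s * x))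
      = fun x : ℝ => (Complex.I * s) ^ n * Complex.exp (Complex.I * s * x) := by
    intro n
    induction n with
    | zero => ext x; simp
    | succ n ih =>
      rw [iteratedDeriv_succ, ih]
      ext x
      have h0 : HasDerivAt (fun x : ℝ => Complex.I * s * (x : ℂ)) (Complex.I * s * 1) x :=
        (Complex.ofRealCLM.hasDerivAt (x := x)).const_mul _
      have := (h0.cexp.const_mul ((Complex.I * s) ^ n)).deriv
      rw [this]; ring
  refine ⟨?_, fun n => ⟨0, |s| ^ n, fun x => ?_⟩⟩
  · have : ContDiff ℝ ∞ (fun x : ℝ => (x : ℂ)) := Complex.ofRealCLM.contDiff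
    exact (contDiff_const.mul this).cexp
  · rw [norm_iteratedFDeriv_eq_norm_iteratedDeriv, hd]
    have : Complex.I * s * x = ((s * x : ℝ) : ℂ) * Complex.I := by push_cast; ring
    rw [norm_mul, this, Complex.norm_exp_ofReal_mul_I]
    simp

lemma tg_ph (s : ℝ) : (ph s).HasTemperateGrowth := (tg_cexp s).comp tg_jap_real

lemma hasDerivAt_ph (s x : ℝ) :
    HasDerivAt (ph s) (Complex.I * s * ((x / jap x : ℝ) : ℂ) * ph s x) x := by
  have h0 := ((hasDerivAt_jap x).ofReal_comp.const_mul (Complex.I * s)).cexp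
  refine HasDerivAt.congr_deriv (f := ph s) h0 ?_
  rw [ph]; ring

/-! ### multiplication on Schwartz functions -/

/-- multiplication operator -/
noncomputable def mu (m : ℝ → ℂ) (h : 𝓢(ℝ, ℂ)) : 𝓢(ℝ, ℂ) := SchwartzMap.smulLeftCLM ℂ m h

lemma mu_apply {m : ℝ → ℂ} (hm : m.HasTemperateGrowth) (h : 𝓢(ℝ, ℂ)) (x : ℝ) :
    mu m h x = m x * h x := by
  simp [mu, hm]

/-- derivative on Schwartz functions -/
noncomputable def dS (h : 𝓢(ℝ, ℂ)) : 𝓢(ℝ, ℂ) := SchwartzMap.derivCLM ℂ ℂ h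

lemma hasDerivAt_dS (h : 𝓢(ℝ, ℂ)) (x : ℝ) : HasDerivAt h (dS h x) x := by
  have := (h.differentiableAt (x := x)).hasDerivAt
  simpa [dS] using this

lemma dS_eq {h : 𝓢(ℝ, ℂ)} {x : ℝ} {d : ℂ} (hd : HasDerivAt h d x) : dS h x = d :=
  (hasDerivAt_dS h x).unique hd

/-! ### inverse Fourier transform on Schwartz functions -/

lemma twopi_pos : 0 < 2 * Real.pi := by positivity

/-- dilation by `1/(2π)` -/
noncomputable def dil : ℝ ≃L[ℝ] ℝ :=
  ContinuousLinearEquiv.smulLeft (Units.mk0 (2 * Real.pi)⁻¹ (by positivity))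

lemma dil_apply (x : ℝ) : dil x = (2 * Real.pi)⁻¹ * x := by
  rfl

/-- inverse Fourier transform as a Schwartz function -/
noncomputable def ifs (h : 𝓢(ℝ, ℂ)) : 𝓢(ℝ, ℂ) :=
  (Real.sqrt (2 * Real.pi) : ℂ)⁻¹ •
    SchwartzMap.compCLMOfContinuousLinearEquiv ℂ dil (𝓕⁻ h)

lemma ifs_apply' (h : 𝓢(ℝ, ℂ)) (x : ℝ) : ifs h x =
    (Real.sqrt (2 * Real.pi) : ℂ)⁻¹ * (𝓕⁻ h) ((2 * Real.pi)⁻¹ * x) := by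
  simp [ifs, dil_apply]

lemma ifs_apply (h : 𝓢(ℝ, ℂ)) (x : ℝ) : ifs h x = IFT h x := by
  rw [ifs_apply', IFT, SchwartzMap.fourierInv_coe, Real.fourierInv_eq']
  congr 1
  apply integral_congr_ae
  filter_upwards with ξ
  simp only [smul_eq_mul]
  congr 2
  have := Real.pi_pos.ne'
  simp
  field_simp

lemma ifs_add (h k : 𝓢(ℝ, ℂ)) : ifs (h + k) = ifs h + ifs k := by
  simp [ifs, FourierTransform.fourierInv_add]

lemma ifs_smul (c : ℂ) (h : 𝓢(ℝ, ℂ)) : ifs (c • h) = c • ifs h := by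
  simp [ifs, FourierTransform.fourierInv_smul, smul_comm c]

lemma ifs_dS (h : 𝓢(ℝ, ℂ)) (x : ℝ) : ifs (dS h) x = -(Complex.I * x) * ifs h x := by
  have h1 := SchwartzMap.fourierInv_lineDerivOp_eq h (1 : ℝ)
  have h2 : LineDeriv.lineDerivOp (1 : ℝ) h = dS h := by
    ext y
    simp [dS, SchwartzMap.lineDerivOp_apply_eq_fderiv]
  rw [h2] at h1
  have ht : (fun x : ℝ => inner ℝ x (1 : ℝ)).HasTemperateGrowth := by fun_prop
  rw [ifs_apply', h1, ifs_apply']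
  rw [_root_.smul_apply, SchwartzMap.smulLeftCLM_apply_apply ht]
  simp
  have := Real.pi_pos.ne'
  field_simp

/-- multiplication by `i x` -/
lemma tg_ix : (fun x : ℝ => Complex.I * (x : ℂ)).HasTemperateGrowth := by
  have : (fun x : ℝ => (x : ℂ)).HasTemperateGrowth := Function.Complex.hasTemperateGrowth_ofReal
  exact (Function.HasTemperateGrowth.const _).mul this

lemma dS_ifs (h : 𝓢(ℝ, ℂ)) : dS (ifs h) = ifs (mu (fun x : ℝ => Complex.I * (x : ℂ)) h) := by
  have h1 := SchwartzMap.lineDerivOp_fourierInv_eq h (1 : ℝ)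
  have h2 : LineDeriv.lineDerivOp (1 : ℝ) (𝓕⁻ h) = dS (𝓕⁻ h) := by
    ext y
    simp [dS, SchwartzMap.lineDerivOp_apply_eq_fderiv]
  rw [h2] at h1
  have ht : (fun x : ℝ => inner ℝ x (1 : ℝ)).HasTemperateGrowth := by fun_prop
  have h3 : (2 * Real.pi * Complex.I) • SchwartzMap.smulLeftCLM ℂ (fun x : ℝ => inner ℝ x (1 : ℝ)) h
      = (2 * Real.pi : ℂ) • mu (fun x : ℝ => Complex.I * (x : ℂ)) h := by
    ext y
    rw [_root_.smul_apply, SchwartzMap.smulLeftCLM_apply_apply ht, _root_.smul_apply, mu_apply tg_ix]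
    simp
    ring
  rw [h3, FourierTransform.fourierInv_smul] at h1
  ext x
  apply dS_eq
  have e : (ifs h : ℝ → ℂ) = fun x => (Real.sqrt (2 * Real.pi) : ℂ)⁻¹ * (𝓕⁻ h) ((2 * Real.pi)⁻¹ * x) := by
    ext x; exact ifs_apply' h x
  rw [e, ifs_apply']
  have hd := hasDerivAt_dS (𝓕⁻ h) ((2 * Real.pi)⁻¹ * x)
  have hl : HasDerivAt (fun x : ℝ => (2 * Real.pi)⁻¹ * x) (2 * Real.pi)⁻¹ x := by
    simpa using (hasDerivAt_id x).const_mul (2 * Real.pi)⁻¹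
  have := (hd.scomp x hl).const_mul (Real.sqrt (2 * Real.pi) : ℂ)⁻¹
  refine HasDerivAt.congr_deriv this ?_
  rw [h1]
  have := Real.pi_pos.ne'
  simp
  field_simp
  exact Or.inl trivial

lemma norm_ifs_le (h : 𝓢(ℝ, ℂ)) (x : ℝ) : ‖ifs h x‖ ≤ ∫ y, ‖h y‖ := by
  have h1 : (1 : ℝ) ≤ Real.sqrt (2 * Real.pi) := Real.one_le_sqrt.2 (by linarith [Real.pi_gt_three])
  rw [ifs_apply, IFT, norm_mul, norm_inv, Complex.norm_real, Real.norm_of_nonneg (by positivity)]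
  have h2 : ‖∫ ξ : ℝ, Complex.exp (Complex.I * x * ξ) * h ξ‖ ≤ ∫ y, ‖h y‖ := by
    refine (norm_integral_le_integral_norm _).trans (le_of_eq ?_)
    congr 1 with y
    have : Complex.I * x * y = ((x * y : ℝ) : ℂ) * Complex.I := by push_cast; ring
    rw [norm_mul, this, Complex.norm_exp_ofReal_mul_I, one_mul]
  calc _ ≤ 1 * ‖∫ ξ : ℝ, Complex.exp (Complex.I * x * ξ) * h ξ‖ := by
        gcongr; exact inv_le_one_of_one_le₀ h1
    _ ≤ _ := by simpa using h2

lemma integral_ifs (h : 𝓢(ℝ, ℂ)) : ∫ x, ‖ifs h x‖ ^ 2 = ∫ x, ‖h x‖ ^ 2 := by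
  have e : ∀ x, ‖ifs h x‖ ^ 2 = (2 * Real.pi)⁻¹ * ‖(𝓕⁻ h) ((2 * Real.pi)⁻¹ * x)‖ ^ 2 := by
    intro x
    rw [ifs_apply', norm_mul, norm_inv, Complex.norm_real, Real.norm_of_nonneg (by positivity),
      mul_pow, inv_pow, Real.sq_sqrt (by positivity)]
  simp_rw [e]
  rw [integral_const_mul, Measure.integral_comp_mul_left (fun y => ‖(𝓕⁻ h : 𝓢(ℝ, ℂ)) y‖ ^ 2)]
  have h2 := SchwartzMap.integral_norm_sq_fourier (𝓕⁻ h)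
  rw [FourierTransform.fourier_fourierInv_eq] at h2
  rw [h2]
  have := Real.pi_pos
  rw [inv_inv, abs_of_pos (by positivity), smul_eq_mul]
  field_simp

/-! ### L² bounds -/

/-- `‖h‖_{L²} ≤ c` -/
def BL (h : ℝ → ℂ) (c : ℝ) : Prop := eLpNorm h 2 volume ≤ ENNReal.ofReal c

lemma BL.mono_const {h : ℝ → ℂ} {c d : ℝ} (hh : BL h c) (hcd : c ≤ d) : BL h d :=
  le_trans hh (ENNReal.ofReal_le_ofReal hcd)

lemma BL.smul {h k : ℝ → ℂ} {c a : ℝ} (hh : BL h c) (ha : 0 ≤ a)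
    (hk : ∀ x, ‖k x‖ ≤ a * ‖h x‖) : BL k (a * c) := by
  have := eLpNorm_le_mul_eLpNorm_of_ae_le_mul (μ := volume) (Filter.Eventually.of_forall hk) 2
  refine this.trans ?_
  rw [ENNReal.ofReal_mul ha]
  gcongr
  exact hh

lemma BL.mono {h k : ℝ → ℂ} {c : ℝ} (hh : BL h c) (hk : ∀ x, ‖k x‖ ≤ ‖h x‖) : BL k c := by
  simpa using hh.smul zero_le_one (k := k) (by simpa using hk)

lemma BL.add {h1 h2 k : ℝ → ℂ} {c1 c2 : ℝ} (hh1 : BL h1 c1) (hh2 : BL h2 c2)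
    (hc1 : 0 ≤ c1) (hc2 : 0 ≤ c2) (m1 : Continuous h1) (m2 : Continuous h2)
    (hk : ∀ x, ‖k x‖ ≤ ‖h1 x‖ + ‖h2 x‖) : BL k (c1 + c2) := by
  have h : eLpNorm k 2 volume ≤ eLpNorm (fun x => ‖h1 x‖ + ‖h2 x‖) 2 volume :=
    eLpNorm_mono_real hk
  have h' := eLpNorm_add_le (μ := (volume : Measure ℝ)) (p := 2) (f := fun x => ‖h1 x‖)
    (g := fun x => ‖h2 x‖) m1.norm.aestronglyMeasurable m2.norm.aestronglyMeasurable (by norm_num)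
  rw [eLpNorm_norm, eLpNorm_norm] at h'
  unfold BL at *
  rw [ENNReal.ofReal_add hc1 hc2]
  exact h.trans (h'.trans (add_le_add hh1 hh2))

lemma eLpNorm_eq (h : ℝ → ℂ) (hm : MemLp h 2 volume) :
    eLpNorm h 2 volume = ENNReal.ofReal (Real.sqrt (∫ x, ‖h x‖ ^ 2)) := by
  rw [hm.eLpNorm_eq_integral_rpow_norm (by norm_num) (by norm_num), Real.sqrt_eq_rpow]
  simp

lemma BL_of_sqrt (h : 𝓢(ℝ, ℂ)) {c : ℝ} (hc : Real.sqrt (∫ x, ‖h x‖ ^ 2) ≤ c) : BL h c := by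
  unfold BL
  rw [eLpNorm_eq h (h.memLp 2 volume)]
  exact ENNReal.ofReal_le_ofReal hc

lemma BL.sq {h : ℝ → ℂ} {c : ℝ} (hc : 0 ≤ c) (hm : AEStronglyMeasurable h volume) (hh : BL h c) :
    ∫ x, ‖h x‖ ^ 2 ≤ c ^ 2 := by
  have hm : MemLp h 2 volume := ⟨hm, lt_of_le_of_lt hh ENNReal.ofReal_lt_top⟩
  unfold BL at hh
  rw [eLpNorm_eq h hm, ENNReal.ofReal_le_ofReal_iff hc] at hh
  have h0 : 0 ≤ ∫ x, ‖h x‖ ^ 2 := integral_nonneg fun x => by positivity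
  rw [← Real.sq_sqrt h0]
  gcongr

lemma BL_ifs {h : 𝓢(ℝ, ℂ)} {c : ℝ} (hh : BL h c) : BL (ifs h) c := by
  unfold BL at *
  rw [eLpNorm_eq _ ((ifs h).memLp 2 volume), integral_ifs, ← eLpNorm_eq _ (h.memLp 2 volume)]
  exact hh

lemma sup_bound {B : 𝓢(ℝ, ℂ)} {b0 b1 : ℝ} (hb0 : 0 ≤ b0) (hb1 : 0 ≤ b1)
    (h0 : BL B b0) (h1 : BL (dS B) b1) (x : ℝ) : ‖B x‖ ≤ b0 + b1 := by
  have hi0 : Integrable (fun y => ‖B y‖ ^ 2) := (B.memLp 2 volume).integrable_norm_pow (by norm_num)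
  have hi1 : Integrable (fun y => ‖dS B y‖ ^ 2) :=
    ((dS B).memLp 2 volume).integrable_norm_pow (by norm_num)
  have hd : ∀ y, HasDerivAt (fun y => ‖B y‖ ^ 2) (2 * inner ℝ (B y) (dS B y)) y := fun y =>
    (hasDerivAt_dS B y).norm_sq
  have hle : ∀ y, ‖2 * inner ℝ (B y) (dS B y)‖ ≤ ‖B y‖ ^ 2 + ‖dS B y‖ ^ 2 := by
    intro y
    have := norm_inner_le_norm (𝕜 := ℝ) (B y) (dS B y)
    rw [norm_mul, Real.norm_ofNat]
    nlinarith [sq_nonneg (‖B y‖ - ‖dS B y‖)]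
  have hc : Continuous fun y => 2 * inner ℝ (B y) (dS B y) :=
    continuous_const.mul (B.continuous.inner (dS B).continuous)
  have hid : Integrable (fun y => 2 * inner ℝ (B y) (dS B y)) :=
    (hi0.add hi1).mono' hc.aestronglyMeasurable (Filter.Eventually.of_forall hle)
  have hlim : Filter.Tendsto (fun y => ‖B y‖ ^ 2) Filter.atBot (nhds 0) := by
    have := (zero_at_infty B).mono_left (atBot_le_cocompact (α := ℝ))
    simpa using this.norm.pow 2
  have hI := integral_Iic_of_hasDerivAt_of_tendsto' (a := x) (fun y _ => hd y) hid.integrableOn hlim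
  have hsq : ‖B x‖ ^ 2 ≤ b0 ^ 2 + b1 ^ 2 := by
    calc ‖B x‖ ^ 2 = ∫ y in Set.Iic x, 2 * inner ℝ (B y) (dS B y) := by rw [hI]; simp
      _ ≤ ∫ y in Set.Iic x, (‖B y‖ ^ 2 + ‖dS B y‖ ^ 2) := by
          apply integral_mono hid.integrableOn (hi0.add hi1).integrableOn
          intro y; exact (le_abs_self _).trans (hle y)
      _ ≤ ∫ y, (‖B y‖ ^ 2 + ‖dS B y‖ ^ 2) :=
          setIntegral_le_integral (hi0.add hi1) (Filter.Eventually.of_forall fun y => by positivity)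
      _ = (∫ y, ‖B y‖ ^ 2) + ∫ y, ‖dS B y‖ ^ 2 := integral_add hi0 hi1
      _ ≤ _ := add_le_add (h0.sq hb0 B.continuous.aestronglyMeasurable)
          (h1.sq hb1 (dS B).continuous.aestronglyMeasurable)
  exact abs_le_of_sq_le_sq' (by nlinarith) (by positivity) |>.2

/-- weight -/
noncomputable def wt (x : ℝ) : ℂ := ((jap x)⁻¹ : ℝ)

lemma norm_wt (x : ℝ) : ‖wt x‖ = (jap x)⁻¹ := by
  rw [wt, Complex.norm_real, Real.norm_of_nonneg (inv_nonneg.2 (jap_pos x).le)]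

lemma continuous_jap : Continuous jap := tg_jap_real.1.continuous

lemma continuous_wt : Continuous wt :=
  Complex.continuous_ofReal.comp (continuous_jap.inv₀ fun x => (jap_pos x).ne')

lemma BL_wt : BL wt (Real.sqrt Real.pi) := by
  have e : ∀ x, ‖wt x‖ ^ 2 = (1 + x ^ 2)⁻¹ := by
    intro x; rw [norm_wt, inv_pow, jap_sq]
  have hm : MemLp wt 2 volume := by
    rw [memLp_two_iff_integrable_sq_norm continuous_wt.aestronglyMeasurable]
    simp_rw [e]; exact integrable_inv_one_add_sq
  unfold BL
  rw [eLpNorm_eq _ hm]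
  simp_rw [e]
  rw [integral_univ_inv_one_add_sq]

lemma rho_int {e : ℝ} (he : 0 < e) :
    Integrable (fun x : ℝ => e ^ 2 * (x ^ 2 + e ^ 2)⁻¹) ∧
      ∫ x : ℝ, e ^ 2 * (x ^ 2 + e ^ 2)⁻¹ = e * Real.pi := by
  have h : (fun x : ℝ => e ^ 2 * (x ^ 2 + e ^ 2)⁻¹) = fun x : ℝ => (1 + (e⁻¹ * x) ^ 2)⁻¹ := by
    ext x; field_simp; ring
  rw [h]
  refine ⟨integrable_inv_one_add_sq.comp_mul_left' (inv_ne_zero he.ne'), ?_⟩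
  rw [Measure.integral_comp_mul_left (fun y : ℝ => (1 + y ^ 2)⁻¹), integral_univ_inv_one_add_sq]
  simp [abs_of_pos he]

/-! ### the key estimate -/

/-- real symbol `ξ⟨ξ⟩/(ξ²+e²)` -/
noncomputable def qq (e x : ℝ) : ℝ := x * jap x * (x ^ 2 + e ^ 2)⁻¹

/-- its derivative -/
noncomputable def qd (e x : ℝ) : ℝ :=
  jap x * (e ^ 2 - x ^ 2) * ((x ^ 2 + e ^ 2)⁻¹) ^ 2 + x ^ 2 * (jap x)⁻¹ * (x ^ 2 + e ^ 2)⁻¹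

lemma tg_id : (fun x : ℝ => x).HasTemperateGrowth := by fun_prop

lemma tg_qq {e : ℝ} (he : 0 < e) : (fun x => (qq e x : ℂ)).HasTemperateGrowth :=
  tg_ofReal ((tg_id.mul tg_jap_real).mul (tg_inv_eps he))

lemma hasDerivAt_qq {e : ℝ} (he : 0 < e) (x : ℝ) : HasDerivAt (qq e) (qd e x) x := by
  have hp : x ^ 2 + e ^ 2 ≠ 0 := by positivity
  have hj := (jap_pos x).ne'
  have h1 : HasDerivAt (fun y : ℝ => y ^ 2 + e ^ 2) (2 * x) x := by
    simpa using (hasDerivAt_pow 2 x).add_const (e ^ 2)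
  have h2 := ((hasDerivAt_id x).mul (hasDerivAt_jap x)).mul (h1.inv hp)
  refine HasDerivAt.congr_deriv (f := qq e) h2 ?_
  simp only [qd, id, Pi.mul_apply, Pi.inv_apply]
  field_simp
  ring

lemma abs_qq_le {e : ℝ} (he : 0 < e) (he1 : e ≤ 1) (x : ℝ) : |qq e x| ≤ 2 / e := by
  have hp : 0 < x ^ 2 + e ^ 2 := by positivity
  have hj := jap_pos x
  rw [qq, abs_mul, abs_mul, abs_of_pos hj, abs_of_pos (inv_pos.2 hp), ← div_eq_mul_inv,
    div_le_div_iff₀ hp he]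
  have h1 := jap_le x
  have h2 := abs_nonneg x
  have h3 : |x| * jap x * e ≤ |x| * (1 + |x|) * e := by gcongr
  have h4 := sq_abs x
  rw [← h4]
  nlinarith [sq_nonneg (|x| - e), mul_le_mul_of_nonneg_left he1 (sq_nonneg |x|)]

lemma abs_qd_le {e : ℝ} (he : 0 < e) (x : ℝ) :
    |qd e x| ≤ jap x * (x ^ 2 + e ^ 2)⁻¹ + 1 := by
  have hp : 0 < x ^ 2 + e ^ 2 := by positivity
  have hj := jap_pos x
  have h1j := one_le_jap x
  refine (abs_add_le _ _).trans (add_le_add ?_ ?_)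
  · rw [abs_mul, abs_mul, abs_of_pos hj, abs_of_nonneg (sq_nonneg ((x ^ 2 + e ^ 2)⁻¹))]
    have : |e ^ 2 - x ^ 2| ≤ x ^ 2 + e ^ 2 := by
      rw [abs_le]; constructor <;> nlinarith [sq_nonneg x, sq_nonneg e]
    calc _ ≤ jap x * (x ^ 2 + e ^ 2) * ((x ^ 2 + e ^ 2)⁻¹) ^ 2 := by gcongr
      _ = _ := by field_simp
  · rw [abs_of_nonneg (by positivity)]
    have h1 : (jap x)⁻¹ ≤ 1 := inv_le_one_of_one_le₀ h1j
    calc _ ≤ x ^ 2 * 1 * (x ^ 2 + e ^ 2)⁻¹ := by gcongr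
      _ ≤ 1 := by
        rw [mul_one, ← div_eq_mul_inv, div_le_one hp]; nlinarith [sq_nonneg e]

lemma low_bound {e : ℝ} (he : 0 < e) (he1 : e ≤ 1) (x : ℝ) :
    (1 + x ^ 2)⁻¹ * (e ^ 2 * (x ^ 2 + e ^ 2)⁻¹ + e ^ 2 * |qd e x|) ≤
      3 * (e ^ 2 * (x ^ 2 + e ^ 2)⁻¹) := by
  have hp : 0 < x ^ 2 + e ^ 2 := by positivity
  have hj := jap_pos x
  have h1j := one_le_jap x
  have hq := abs_qd_le he x
  have hjs := jap_sq x
  have hee : e ^ 2 ≤ 1 := by nlinarith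
  have hj2 : jap x ≤ 1 + x ^ 2 := by nlinarith
  have hx := sq_nonneg x
  calc _ ≤ (1 + x ^ 2)⁻¹ * (e ^ 2 * (x ^ 2 + e ^ 2)⁻¹ +
        e ^ 2 * (jap x * (x ^ 2 + e ^ 2)⁻¹ + 1)) := by gcongr
    _ = (e ^ 2 * (x ^ 2 + e ^ 2)⁻¹) * ((1 + x ^ 2)⁻¹ * (1 + jap x + (x ^ 2 + e ^ 2))) := by
      field_simp
      ring
    _ ≤ (e ^ 2 * (x ^ 2 + e ^ 2)⁻¹) * 3 := by
      gcongr
      rw [inv_mul_le_iff₀ (by positivity)]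
      nlinarith
    _ = _ := by ring

lemma high_bound {e : ℝ} (he : 0 < e) (x : ℝ) :
    (1 - (1 + x ^ 2)⁻¹) * (e ^ 2 * (x ^ 2 + e ^ 2)⁻¹ + e ^ 2 * |qd e x|) ≤ 3 * e ^ 2 := by
  have hp : 0 < x ^ 2 + e ^ 2 := by positivity
  have hj := jap_pos x
  have h1j := one_le_jap x
  have hq := abs_qd_le he x
  have hjs := jap_sq x
  have hj2 : jap x ≤ 1 + x ^ 2 := by nlinarith
  have hx := sq_nonneg x
  have ea : 1 - (1 + x ^ 2)⁻¹ = x ^ 2 * (1 + x ^ 2)⁻¹ := by field_simp; ring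
  rw [ea]
  calc _ ≤ x ^ 2 * (1 + x ^ 2)⁻¹ * (e ^ 2 * (x ^ 2 + e ^ 2)⁻¹ +
        e ^ 2 * (jap x * (x ^ 2 + e ^ 2)⁻¹ + 1)) := by gcongr
    _ = e ^ 2 * ((1 + x ^ 2)⁻¹ * ((x ^ 2 * (x ^ 2 + e ^ 2)⁻¹) * (1 + jap x) + x ^ 2)) := by
      field_simp
      ring
    _ ≤ e ^ 2 * ((1 + x ^ 2)⁻¹ * (1 * (1 + jap x) + x ^ 2)) := by
      gcongr
      rw [← div_eq_mul_inv, div_le_one hp]; nlinarith [sq_nonneg e]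
    _ ≤ e ^ 2 * 3 := by
      gcongr
      rw [inv_mul_le_iff₀ (by positivity)]
      nlinarith
    _ = _ := by ring

lemma tg_alpha : (fun x : ℝ => (((1 + x ^ 2)⁻¹ : ℝ) : ℂ)).HasTemperateGrowth :=
  tg_ofReal tg_inv_real

lemma tg_beta : (fun x : ℝ => ((1 - (1 + x ^ 2)⁻¹ : ℝ) : ℂ)).HasTemperateGrowth :=
  tg_ofReal ((Function.HasTemperateGrowth.const (1 : ℝ)).sub tg_inv_real)

lemma key {s e : ℝ} (he : 0 < e) (he1 : e ≤ 1) (hs : e ^ 2 * |s| = 1)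
    {B : 𝓢(ℝ, ℂ)} {b0 b1 : ℝ} (hb0 : 0 ≤ b0) (hb1 : 0 ≤ b1)
    (h0 : BL B b0) (h1 : BL (dS B) b1) :
    BL (fun x => wt x * ifs (mu (ph s) B) x)
      (e * ((3 * Real.pi * Real.sqrt Real.pi + 5) * (b0 + b1))) := by
  have hs0 : s ≠ 0 := by rintro rfl; simp at hs
  have hsa : 0 < |s| := abs_pos.2 hs0
  have hsi : |s|⁻¹ = e ^ 2 := by field_simp; linarith
  set c : ℂ := (Complex.I * s)⁻¹ with hc
  have hcn : ‖c‖ = e ^ 2 := by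
    rw [hc, norm_inv, norm_mul, Complex.norm_I, one_mul, Complex.norm_real, Real.norm_eq_abs, hsi]
  have hcI : c * (Complex.I * s) = 1 := by
    rw [hc]; apply inv_mul_cancel₀; simp [hs0]
  set EB := mu (ph s) B with hEB
  set V := mu (fun x => (qq e x : ℂ)) EB with hV
  set W := mu (fun x => (qq e x : ℂ)) (mu (ph s) (dS B)) with hW
  set R := EB + (-c) • dS V + c • W with hR
  set R1 := mu (fun x : ℝ => (((1 + x ^ 2)⁻¹ : ℝ) : ℂ)) R with hR1
  set R2 := mu (fun x : ℝ => ((1 - (1 + x ^ 2)⁻¹ : ℝ) : ℂ)) R with hR2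
  have hEBa : ∀ x, EB x = ph s x * B x := fun x => mu_apply (tg_ph s) _ _
  have hVa : ∀ x, V x = qq e x * (ph s x * B x) := fun x => by
    rw [hV, mu_apply (tg_qq he), hEBa]
  have hWa : ∀ x, W x = qq e x * (ph s x * dS B x) := fun x => by
    rw [hW, mu_apply (tg_qq he), mu_apply (tg_ph s)]
  have hdV : ∀ x, dS V x = qd e x * (ph s x * B x) + qq e x *
      (Complex.I * s * ((x / jap x : ℝ) : ℂ) * ph s x * B x + ph s x * dS B x) := by
    intro x
    apply dS_eq
    have hd := (hasDerivAt_qq he x).ofReal_comp.mul ((hasDerivAt_ph s x).mul (hasDerivAt_dS B x))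
    have hVf : (V : ℝ → ℂ) = fun x => qq e x * (ph s x * B x) := funext hVa
    rw [hVf]
    exact hd
  have hRa : ∀ x, R x = ((e ^ 2 * (x ^ 2 + e ^ 2)⁻¹ : ℝ) - c * qd e x) * (ph s x * B x) := by
    intro x
    have e1 : R x = EB x + (-c) * dS V x + c * W x := by simp [hR]
    rw [e1, hEBa, hdV, hWa]
    have hj := (jap_pos x).ne'
    have hp : x ^ 2 + e ^ 2 ≠ 0 := by positivity
    have e2 : ((e ^ 2 * (x ^ 2 + e ^ 2)⁻¹ : ℝ) : ℂ) = 1 - ((qq e x * (x / jap x) : ℝ) : ℂ) := by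
      rw [← Complex.ofReal_one, ← Complex.ofReal_sub]
      congr 1
      rw [qq]; field_simp; ring
    rw [e2]
    push_cast
    linear_combination (-(qq e x * (x / jap x)) * ph s x * B x : ℂ) * hcI
  have hRn : ∀ x, ‖R x‖ ≤ (e ^ 2 * (x ^ 2 + e ^ 2)⁻¹ + e ^ 2 * |qd e x|) * ‖B x‖ := by
    intro x
    rw [hRa, norm_mul, norm_mul, norm_ph, one_mul]
    gcongr
    refine (norm_sub_le _ _).trans ?_
    rw [norm_mul, hcn, Complex.norm_real, Complex.norm_real, Real.norm_eq_abs, Real.norm_eq_abs,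
      abs_of_nonneg (by positivity : 0 ≤ e ^ 2 * (x ^ 2 + e ^ 2)⁻¹)]
  -- the low frequency part
  have hsup := sup_bound hb0 hb1 h0 h1
  have hR1n : ∀ x, ‖R1 x‖ ≤ (3 * (b0 + b1)) * (e ^ 2 * (x ^ 2 + e ^ 2)⁻¹) := by
    intro x
    rw [hR1, mu_apply tg_alpha, norm_mul, Complex.norm_real, Real.norm_of_nonneg (by positivity)]
    calc _ ≤ (1 + x ^ 2)⁻¹ * ((e ^ 2 * (x ^ 2 + e ^ 2)⁻¹ + e ^ 2 * |qd e x|) * ‖B x‖) := by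
          gcongr; exact hRn x
      _ = ((1 + x ^ 2)⁻¹ * (e ^ 2 * (x ^ 2 + e ^ 2)⁻¹ + e ^ 2 * |qd e x|)) * ‖B x‖ := by ring
      _ ≤ (3 * (e ^ 2 * (x ^ 2 + e ^ 2)⁻¹)) * (b0 + b1) := by
          exact mul_le_mul (low_bound he he1 x) (hsup x) (norm_nonneg _) (by positivity)
      _ = _ := by ring
  have hR1i : ∀ x, ‖ifs R1 x‖ ≤ (3 * (b0 + b1)) * (e * Real.pi) := by
    intro x
    refine (norm_ifs_le R1 x).trans ?_
    rw [← (rho_int he).2, ← integral_const_mul]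
    exact integral_mono R1.integrable.norm ((rho_int he).1.const_mul _) hR1n
  have T1 : BL (fun x => wt x * ifs R1 x) ((3 * (b0 + b1)) * (e * Real.pi) * Real.sqrt Real.pi) := by
    apply BL_wt.smul (by positivity)
    intro x
    rw [norm_mul, mul_comm]
    gcongr
    exact hR1i x
  have hwt1 : ∀ x, ‖wt x‖ ≤ 1 := fun x => by
    rw [norm_wt]; exact inv_le_one_of_one_le₀ (one_le_jap x)
  have hwtx : ∀ x, ‖wt x‖ * |x| ≤ 1 := fun x => by
    rw [norm_wt, inv_mul_le_iff₀ (jap_pos x), mul_one]; exact abs_le_jap x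
  have T2 : BL (fun x => wt x * ifs R2 x) (3 * e ^ 2 * b0) := by
    have : BL R2 (3 * e ^ 2 * b0) := by
      apply h0.smul (by positivity)
      intro x
      have hn : 0 ≤ 1 - (1 + x ^ 2)⁻¹ := by
        have : (1 + x ^ 2)⁻¹ ≤ 1 := inv_le_one_of_one_le₀ (by nlinarith [sq_nonneg x])
        linarith
      rw [hR2, mu_apply tg_beta, norm_mul, Complex.norm_real, Real.norm_of_nonneg hn]
      calc _ ≤ (1 - (1 + x ^ 2)⁻¹) * ((e ^ 2 * (x ^ 2 + e ^ 2)⁻¹ + e ^ 2 * |qd e x|) * ‖B x‖) := by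
            gcongr; exact hRn x
        _ = ((1 - (1 + x ^ 2)⁻¹) * (e ^ 2 * (x ^ 2 + e ^ 2)⁻¹ + e ^ 2 * |qd e x|)) * ‖B x‖ := by ring
        _ ≤ _ := by
            exact mul_le_mul_of_nonneg_right (high_bound he x) (norm_nonneg _)
    apply (BL_ifs this).mono
    intro x
    rw [norm_mul]
    exact mul_le_of_le_one_left (norm_nonneg _) (hwt1 x)
  have T3 : BL (fun x => wt x * (c * ifs (dS V) x)) (e ^ 2 * (2 / e * b0)) := by
    have : BL V (2 / e * b0) := by
      apply h0.smul (by positivity)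
      intro x
      rw [hVa, norm_mul, norm_mul, norm_ph, one_mul, Complex.norm_real, Real.norm_eq_abs]
      gcongr
      exact abs_qq_le he he1 x
    apply (BL_ifs this).smul (by positivity)
    intro x
    rw [ifs_dS, norm_mul, norm_mul, norm_mul, norm_neg, norm_mul, Complex.norm_I, one_mul, hcn,
      Complex.norm_real, Real.norm_eq_abs]
    calc _ = (‖wt x‖ * |x|) * (e ^ 2 * ‖ifs V x‖) := by ring
      _ ≤ 1 * (e ^ 2 * ‖ifs V x‖) := by gcongr; exact hwtx x
      _ = _ := by ring
  have T4 : BL (fun x => wt x * (c * ifs W x)) (e ^ 2 * (2 / e * b1)) := by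
    have : BL W (2 / e * b1) := by
      apply h1.smul (by positivity)
      intro x
      rw [hWa, norm_mul, norm_mul, norm_ph, one_mul, Complex.norm_real, Real.norm_eq_abs]
      gcongr
      exact abs_qq_le he he1 x
    apply (BL_ifs this).smul (by positivity)
    intro x
    rw [norm_mul, norm_mul, hcn]
    exact mul_le_of_le_one_left (by positivity) (hwt1 x)
  have hsum : EB = R1 + R2 + c • dS V + (-c) • W := by
    ext x
    simp only [_root_.add_apply, _root_.smul_apply, smul_eq_mul]
    rw [hR1, hR2, mu_apply tg_alpha, mu_apply tg_beta]
    have e1 : R x = EB x + (-c) * dS V x + c * W x := by simp [hR]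
    rw [e1]
    push_cast
    ring
  have hfin : ∀ x, ifs EB x = ifs R1 x + ifs R2 x + c * ifs (dS V) x - c * ifs W x := by
    intro x
    rw [hsum]
    simp only [ifs_add, ifs_smul, _root_.add_apply, _root_.smul_apply, smul_eq_mul]
    ring
  have c1 : Continuous fun x => wt x * ifs R1 x := continuous_wt.mul (ifs R1).continuous
  have c2 : Continuous fun x => wt x * ifs R2 x := continuous_wt.mul (ifs R2).continuous
  have c3 : Continuous fun x => wt x * (c * ifs (dS V) x) :=
    continuous_wt.mul (continuous_const.mul (ifs _).continuous)
  have c4 : Continuous fun x => wt x * (c * ifs W x) :=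
    continuous_wt.mul (continuous_const.mul (ifs _).continuous)
  have A1 := T1.add T2 (by positivity) (by positivity) c1 c2
    (k := fun x => wt x * ifs R1 x + wt x * ifs R2 x) (fun x => norm_add_le _ _)
  have A2 := T3.add T4 (by positivity) (by positivity) c3 c4
    (k := fun x => wt x * (c * ifs (dS V) x) - wt x * (c * ifs W x)) (fun x => norm_sub_le _ _)
  have A3 := A1.add A2 (by positivity) (by positivity) (c1.add c2) (c3.sub c4)
    (k := fun x => wt x * ifs EB x) (fun x => by
      rw [hfin]
      refine le_trans (le_of_eq ?_) (norm_add_le _ _)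
      congr 1; ring)
  refine A3.mono_const ?_
  have e3 : e ^ 2 * (2 / e * b0) + e ^ 2 * (2 / e * b1) = 2 * e * b0 + 2 * e * b1 := by
    field_simp
  rw [e3]
  have : e ^ 2 * b0 ≤ e * b0 := by gcongr; nlinarith
  have : 0 ≤ e * b1 := by positivity
  nlinarith

/-! ### bounds on the Fourier side -/

lemma BL_ifs_coef {p g : 𝓢(ℝ, ℂ)} {N : ℝ} (hN : 0 ≤ N) (hp : BL p N) (hp' : BL (dS p) N)
    {a a' : ℝ → ℂ} (ha : ∀ x, HasDerivAt a (a' x) x) (h1 : ∀ x, ‖a x‖ ≤ 1) (h2 : ∀ x, ‖a' x‖ ≤ 1)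
    (hg : ∀ x, g x = a x * p x) :
    BL (ifs g) N ∧ BL (ifs (dS g)) (2 * N) ∧ BL (fun x => (jap x : ℂ) * ifs g x) (3 * N) := by
  have b0 : BL g N := hp.mono fun x => by
    rw [hg, norm_mul]; exact mul_le_of_le_one_left (norm_nonneg _) (h1 x)
  have b1 : BL (dS g) (2 * N) := by
    have := hp.add hp' hN hN p.continuous (dS p).continuous (k := dS g) (fun x => by
      have hd : HasDerivAt g (a' x * p x + a x * dS p x) x := by
        have hgf : (g : ℝ → ℂ) = fun x => a x * p x := funext hg
        rw [hgf]
        exact (ha x).mul (hasDerivAt_dS p x)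
      rw [dS_eq hd]
      refine (norm_add_le _ _).trans (add_le_add ?_ ?_)
      · rw [norm_mul]; exact mul_le_of_le_one_left (norm_nonneg _) (h2 x)
      · rw [norm_mul]; exact mul_le_of_le_one_left (norm_nonneg _) (h1 x))
    exact this.mono_const (by linarith)
  have c0 := BL_ifs b0
  have c1 := BL_ifs b1
  refine ⟨c0, c1, ?_⟩
  have := c0.add c1 hN (by linarith) (ifs g).continuous (ifs (dS g)).continuous
    (k := fun x => (jap x : ℂ) * ifs g x) (fun x => by
      rw [ifs_dS, norm_mul, norm_mul, norm_neg, norm_mul, Complex.norm_I, one_mul,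
        Complex.norm_real, Complex.norm_real, Real.norm_eq_abs, Real.norm_eq_abs,
        abs_of_pos (jap_pos x)]
      have := mul_le_mul_of_nonneg_right (jap_le x) (norm_nonneg (ifs g x))
      linarith)
  exact this.mono_const (by linarith)

/-- `ix` -/
noncomputable def ix (x : ℝ) : ℂ := Complex.I * (x : ℂ)

lemma tg_ix' : ix.HasTemperateGrowth := tg_ix

/-- `(1+x²)⁻¹` -/
noncomputable def al (x : ℝ) : ℂ := (((1 + x ^ 2)⁻¹ : ℝ) : ℂ)

lemma hasDerivAt_al_real (x : ℝ) :
    HasDerivAt (fun x : ℝ => (1 + x ^ 2)⁻¹) (-(2 * x) / (1 + x ^ 2) ^ 2) x := by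
  have h1 : HasDerivAt (fun y : ℝ => 1 + y ^ 2) (2 * x) x := by
    simpa using (hasDerivAt_pow 2 x).const_add 1
  exact h1.inv (by positivity)

lemma hasDerivAt_xal_real (x : ℝ) :
    HasDerivAt (fun x : ℝ => x * (1 + x ^ 2)⁻¹) ((1 - x ^ 2) / (1 + x ^ 2) ^ 2) x := by
  refine HasDerivAt.congr_deriv ((hasDerivAt_id x).mul (hasDerivAt_al_real x)) ?_
  simp only [id]
  field_simp
  ring

lemma G_bounds {p : 𝓢(ℝ, ℂ)} {N : ℝ} (hN : 0 ≤ N) (hp : BL p N) (hp' : BL (dS p) N) :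
    let G0 := ifs (mu al p)
    BL (ifs (dS (mu al p))) (2 * N) ∧ BL (mu (fun x => (jap x : ℂ)) G0) (3 * N) ∧
      BL (dS (mu (fun x => (jap x : ℂ)) G0)) (4 * N) ∧
      BL (dS (dS (mu (fun x => (jap x : ℂ)) G0))) (6 * N) := by
  intro G0
  set g0 := mu al p with hg0
  set g1 := mu ix g0 with hg1
  set g2 := mu ix g1 with hg2
  have tix : ix.HasTemperateGrowth := tg_ix
  have tal : al.HasTemperateGrowth := tg_alpha
  have d0 : dS (ifs g0) = ifs g1 := dS_ifs g0
  have d1 : dS (ifs g1) = ifs g2 := dS_ifs g1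
  have B0 := BL_ifs_coef (g := g0) (a := al)
    (a' := fun x => ((-(2 * x) / (1 + x ^ 2) ^ 2 : ℝ) : ℂ)) hN hp hp'
    (fun x => (hasDerivAt_al_real x).ofReal_comp)
    (fun x => by
      rw [al, Complex.norm_real, Real.norm_of_nonneg (by positivity)]
      exact inv_le_one_of_one_le₀ (by nlinarith [sq_nonneg x]))
    (fun x => by
      rw [Complex.norm_real, Real.norm_eq_abs, abs_div, abs_of_pos (by positivity : 0 < (1 + x ^ 2) ^ 2),
        div_le_one (by positivity), abs_le]
      constructor <;> nlinarith [sq_nonneg x, sq_nonneg (x - 1), sq_nonneg (x + 1), sq_nonneg (x ^ 2)])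
    (fun x => mu_apply tal p x)
  have B1 := BL_ifs_coef (g := g1) (a := fun x => Complex.I * ((x * (1 + x ^ 2)⁻¹ : ℝ) : ℂ))
    (a' := fun x => Complex.I * (((1 - x ^ 2) / (1 + x ^ 2) ^ 2 : ℝ) : ℂ)) hN hp hp'
    (fun x => (hasDerivAt_xal_real x).ofReal_comp.const_mul _)
    (fun x => by
      rw [norm_mul, Complex.norm_I, one_mul, Complex.norm_real, Real.norm_eq_abs, ← div_eq_mul_inv,
        abs_div, abs_of_pos (by positivity : 0 < (1 + x ^ 2)), div_le_one (by positivity), abs_le]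
      constructor <;> nlinarith [sq_nonneg x, sq_nonneg (x - 1), sq_nonneg (x + 1)])
    (fun x => by
      rw [norm_mul, Complex.norm_I, one_mul, Complex.norm_real, Real.norm_eq_abs,
        abs_div, abs_of_pos (by positivity : 0 < (1 + x ^ 2) ^ 2),
        div_le_one (by positivity), abs_le]
      constructor <;> nlinarith [sq_nonneg x, sq_nonneg (x ^ 2)])
    (fun x => by
      rw [hg1, mu_apply tix, hg0, mu_apply tal, ix, al]; push_cast; ring)
  have B2 := BL_ifs_coef (g := g2) (a := fun x => (((1 + x ^ 2)⁻¹ - 1 : ℝ) : ℂ))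
    (a' := fun x => ((-(2 * x) / (1 + x ^ 2) ^ 2 : ℝ) : ℂ)) hN hp hp'
    (fun x => ((hasDerivAt_al_real x).sub_const 1).ofReal_comp)
    (fun x => by
      have h1 : (1 + x ^ 2)⁻¹ ≤ 1 := inv_le_one_of_one_le₀ (by nlinarith [sq_nonneg x])
      have h2 : 0 < (1 + x ^ 2)⁻¹ := by positivity
      rw [Complex.norm_real, Real.norm_eq_abs, abs_le]
      constructor <;> linarith)
    (fun x => by
      rw [Complex.norm_real, Real.norm_eq_abs, abs_div, abs_of_pos (by positivity : 0 < (1 + x ^ 2) ^ 2),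
        div_le_one (by positivity), abs_le]
      constructor <;> nlinarith [sq_nonneg x, sq_nonneg (x - 1), sq_nonneg (x + 1), sq_nonneg (x ^ 2)])
    (fun x => by
      rw [hg2, mu_apply tix, hg1, mu_apply tix, hg0, mu_apply tal, ix, al]
      have : (((1 + x ^ 2)⁻¹ - 1 : ℝ) : ℂ) = ((-(x * (x * (1 + x ^ 2)⁻¹)) : ℝ) : ℂ) := by
        congr 1; field_simp; ring
      rw [this]
      push_cast
      linear_combination (x * (x * (1 + (x : ℂ) ^ 2)⁻¹) * p x) * Complex.I_sq)
  have hG0 : G0 = ifs g0 := rfl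
  set H := mu (fun x => (jap x : ℂ)) G0 with hH
  have hHa : ∀ x, H x = jap x * ifs g0 x := fun x => mu_apply tg_jap _ _
  have hH1 : ∀ x, dS H x = ((x / jap x : ℝ) : ℂ) * ifs g0 x + jap x * ifs g1 x := by
    intro x
    apply dS_eq
    have hHf : (H : ℝ → ℂ) = fun x => jap x * ifs g0 x := funext hHa
    rw [hHf, ← d0]
    exact (hasDerivAt_jap x).ofReal_comp.mul (hasDerivAt_dS _ x)
  have hxj : ∀ x, HasDerivAt (fun x => x / jap x) ((jap x ^ 3)⁻¹) x := by
    intro x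
    have hj := (jap_pos x).ne'
    refine HasDerivAt.congr_deriv ((hasDerivAt_id x).div (hasDerivAt_jap x) hj) ?_
    have := jap_sq x
    simp only [id]
    field_simp
    linarith
  have hH2 : ∀ x, dS (dS H) x = (((jap x ^ 3)⁻¹ : ℝ) : ℂ) * ifs g0 x +
      2 * (((x / jap x : ℝ) : ℂ) * ifs g1 x) + jap x * ifs g2 x := by
    intro x
    apply dS_eq
    have hHf : (dS H : ℝ → ℂ) = fun x => ((x / jap x : ℝ) : ℂ) * ifs g0 x + jap x * ifs g1 x :=
      funext hH1
    have e0 := hasDerivAt_dS (ifs g0) x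
    have e1 := hasDerivAt_dS (ifs g1) x
    rw [d0] at e0
    rw [d1] at e1
    rw [hHf]
    refine HasDerivAt.congr_deriv (((hxj x).ofReal_comp.mul e0).add
      ((hasDerivAt_jap x).ofReal_comp.mul e1)) ?_
    ring
  have nj : ∀ x, ‖((x / jap x : ℝ) : ℂ)‖ ≤ 1 := by
    intro x
    rw [Complex.norm_real, Real.norm_eq_abs, abs_div, abs_of_pos (jap_pos x), div_le_one (jap_pos x)]
    exact abs_le_jap x
  have nj3 : ∀ x, ‖(((jap x ^ 3)⁻¹ : ℝ) : ℂ)‖ ≤ 1 := by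
    intro x
    have := jap_pos x
    rw [Complex.norm_real, Real.norm_of_nonneg (by positivity)]
    exact inv_le_one_of_one_le₀ (one_le_pow₀ (one_le_jap x))
  have cj : Continuous fun x => (jap x : ℂ) := tg_jap.1.continuous
  have cc : ∀ g : 𝓢(ℝ, ℂ), Continuous fun x => (jap x : ℂ) * g x := fun g => cj.mul g.continuous
  refine ⟨B0.2.1, ?_, ?_, ?_⟩
  · exact B0.2.2.mono fun x => by rw [hHa]
  · have := B0.1.add B1.2.2 hN (by linarith) (ifs g0).continuous (cc _) (k := dS H) (fun x => by
      rw [hH1]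
      refine (norm_add_le _ _).trans (add_le_add ?_ le_rfl)
      rw [norm_mul]; exact mul_le_of_le_one_left (norm_nonneg _) (nj x))
    exact this.mono_const (by linarith)
  · have t1 : BL (fun x => 2 * ifs g1 x) (2 * N) := B1.1.smul (by norm_num) (fun x => by simp)
    have t2 := B0.1.add t1 hN (by linarith) (ifs g0).continuous
      (continuous_const.mul (ifs g1).continuous)
      (k := fun x => (((jap x ^ 3)⁻¹ : ℝ) : ℂ) * ifs g0 x + 2 * (((x / jap x : ℝ) : ℂ) * ifs g1 x))
      (fun x => by
        refine (norm_add_le _ _).trans (add_le_add ?_ ?_)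
        · rw [norm_mul]; exact mul_le_of_le_one_left (norm_nonneg _) (nj3 x)
        · rw [norm_mul, norm_mul, norm_mul]
          gcongr
          exact mul_le_of_le_one_left (norm_nonneg _) (nj x))
    have cxj : Continuous fun x => ((x / jap x : ℝ) : ℂ) :=
      Complex.continuous_ofReal.comp (continuous_id.div continuous_jap fun x => (jap_pos x).ne')
    have cj3 : Continuous fun x => (((jap x ^ 3)⁻¹ : ℝ) : ℂ) :=
      Complex.continuous_ofReal.comp ((continuous_jap.pow 3).inv₀ fun x => pow_ne_zero _ (jap_pos x).ne')
    have t3 := t2.add B2.2.2 (by linarith) (by linarith)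
      ((cj3.mul (ifs g0).continuous).add (continuous_const.mul (cxj.mul (ifs g1).continuous)))
      (cc _) (k := dS (dS H)) (fun x => by
        rw [hH2]; exact norm_add_le _ _)
    exact t3.mono_const (by linarith)

/-! ### the evolution -/

lemma small_time {p : 𝓢(ℝ, ℂ)} {N : ℝ} (hN : 0 ≤ N) (hp : BL p N) (hp' : BL (dS p) N) (s : ℝ) :
    BL (fun x => wt x ^ 2 * ifs (mu ix (mu (ph s) (ifs (mu al p)))) x) (2 * N) := by
  have hG := (G_bounds hN hp hp').1
  have h1 : BL (mu ix (mu (ph s) (ifs (mu al p)))) (2 * N) := hG.mono fun x => by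
    rw [mu_apply tg_ix', mu_apply (tg_ph s), ifs_dS, norm_mul, norm_mul, norm_ph, one_mul,
      norm_mul, norm_neg, ix]
  refine (BL_ifs h1).mono fun x => ?_
  rw [norm_mul, norm_pow, norm_wt]
  exact mul_le_of_le_one_left (norm_nonneg _)
    (pow_le_one₀ (inv_nonneg.2 (jap_pos x).le) (inv_le_one_of_one_le₀ (one_le_jap x)))

lemma large_time {p : 𝓢(ℝ, ℂ)} {N : ℝ} (hN : 0 ≤ N) (hp : BL p N) (hp' : BL (dS p) N)
    {s e : ℝ} (he : 0 < e) (he1 : e ≤ 1) (hs : e ^ 2 * |s| = 1) :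
    BL (fun x => wt x ^ 2 * ifs (mu ix (mu (ph s) (ifs (mu al p)))) x)
      (e ^ 3 * (17 * (3 * Real.pi * Real.sqrt Real.pi + 5) * N)) := by
  obtain ⟨-, b0, b1, b2⟩ := G_bounds hN hp hp'
  set G := ifs (mu al p) with hG
  set H := mu (fun x => (jap x : ℂ)) G with hH
  have hs0 : s ≠ 0 := by rintro rfl; simp at hs
  have hsa : 0 < |s| := abs_pos.2 hs0
  have hsi : |s|⁻¹ = e ^ 2 := by field_simp; linarith
  have k0 := key he he1 hs (by linarith) (by linarith) b0 b1
  have k1 := key he he1 hs (by linarith) (by linarith) b1 b2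
  have hHa : ∀ x, H x = jap x * G x := fun x => mu_apply tg_jap _ _
  have hd : ∀ x, dS (mu (ph s) H) x = Complex.I * s * ((x / jap x : ℝ) : ℂ) * ph s x * H x
      + ph s x * dS H x := by
    intro x
    apply dS_eq
    have e1 : (mu (ph s) H : ℝ → ℂ) = fun x => ph s x * H x :=
      funext fun x => mu_apply (tg_ph s) _ _
    rw [e1]
    exact (hasDerivAt_ph s x).mul (hasDerivAt_dS H x)
  have hsC : (s : ℂ) ≠ 0 := by exact_mod_cast hs0
  have hU : mu ix (mu (ph s) G) = ((s : ℂ)⁻¹) • dS (mu (ph s) H) + (-(s : ℂ)⁻¹) • mu (ph s) (dS H) := by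
    ext x
    simp only [_root_.add_apply, _root_.smul_apply, smul_eq_mul]
    rw [mu_apply tg_ix', mu_apply (tg_ph s), hd, mu_apply (tg_ph s), hHa, ix]
    have hj : (jap x : ℂ) ≠ 0 := by exact_mod_cast (jap_pos x).ne'
    push_cast
    field_simp
    ring
  have hUx : ∀ x, ifs (mu ix (mu (ph s) G)) x = (s : ℂ)⁻¹ * (-(Complex.I * x) * ifs (mu (ph s) H) x
      - ifs (mu (ph s) (dS H)) x) := by
    intro x
    rw [hU]
    simp only [ifs_add, ifs_smul, _root_.add_apply, _root_.smul_apply, smul_eq_mul, ifs_dS]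
    ring
  set K := 3 * Real.pi * Real.sqrt Real.pi + 5 with hK
  have hKp : 0 < K := by positivity
  have a := k0.add k1 (by positivity) (by positivity)
    (continuous_wt.mul (ifs _).continuous) (continuous_wt.mul (ifs _).continuous)
    (k := fun x => s * (wt x ^ 2 * ifs (mu ix (mu (ph s) G)) x)) (fun x => by
      rw [hUx]
      have e1 : (s : ℂ) * (wt x ^ 2 * ((s : ℂ)⁻¹ * (-(Complex.I * x) * ifs (mu (ph s) H) x
          - ifs (mu (ph s) (dS H)) x))) = wt x * (-(Complex.I * x)) * (wt x * ifs (mu (ph s) H) x)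
          - wt x * (wt x * ifs (mu (ph s) (dS H)) x) := by
        field_simp
      rw [e1]
      refine (norm_sub_le _ _).trans (add_le_add ?_ ?_)
      · rw [norm_mul]
        refine mul_le_of_le_one_left (norm_nonneg _) ?_
        rw [norm_mul, norm_neg, norm_mul, Complex.norm_I, one_mul, norm_wt,
          inv_mul_le_iff₀ (jap_pos x), mul_one, Complex.norm_real]
        exact abs_le_jap x
      · rw [norm_mul]
        refine mul_le_of_le_one_left (norm_nonneg _) ?_
        rw [norm_wt]; exact inv_le_one_of_one_le₀ (one_le_jap x))
  have b := a.smul (a := e ^ 2) (by positivity)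
    (k := fun x => wt x ^ 2 * ifs (mu ix (mu (ph s) G)) x) (fun x => by
      rw [norm_mul (s : ℂ), Complex.norm_real, Real.norm_eq_abs, ← mul_assoc, hs, one_mul])
  refine b.mono_const (le_of_eq ?_)
  ring

/-- reflection -/
noncomputable def refl (f : 𝓢(ℝ, ℂ)) : 𝓢(ℝ, ℂ) :=
  SchwartzMap.compCLMOfContinuousLinearEquiv ℂ (ContinuousLinearEquiv.neg ℝ) f

lemma refl_apply (f : 𝓢(ℝ, ℂ)) (x : ℝ) : refl f x = f (-x) := by simp [refl]

lemma dS_refl (f : 𝓢(ℝ, ℂ)) (x : ℝ) : dS (refl f) x = -dS f (-x) := by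
  apply dS_eq
  have e : (refl f : ℝ → ℂ) = fun x => f (-x) := funext (refl_apply f)
  rw [e]
  have := (hasDerivAt_dS f (-x)).scomp x (hasDerivAt_neg x)
  refine HasDerivAt.congr_deriv (f := fun x => f (-x)) this ?_
  simp

lemma jap_rpow (x : ℝ) : jap x ^ (-(2 : ℝ)) = (1 + x ^ 2)⁻¹ := by
  rw [Real.rpow_neg (jap_pos x).le, ← jap_sq]
  norm_num

lemma FT_eq (f : 𝓢(ℝ, ℂ)) (ξ : ℝ) :
    FT (fun z => ((jap z ^ (-(2 : ℝ)) : ℝ) : ℂ) * f z) ξ = ifs (mu al (refl f)) ξ := by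
  have tal : al.HasTemperateGrowth := tg_alpha
  rw [ifs_apply, FT, IFT]
  congr 1
  rw [← integral_neg_eq_self]
  congr 1 with x
  rw [mu_apply tal, refl_apply, al, jap_rpow]
  congr 2
  · push_cast; ring
  · simp

lemma final_bound (C : ℝ) (hC : 4 ≤ C) (hC' : 4 * (17 * (3 * Real.pi * Real.sqrt Real.pi + 5)) ≤ C)
    {p : 𝓢(ℝ, ℂ)} {N : ℝ} (hN : 0 ≤ N) (hp : BL p N) (hp' : BL (dS p) N) (s t : ℝ) (hst : |s| = |t|) :
    BL (fun x => wt x ^ 2 * ifs (mu ix (mu (ph s) (ifs (mu al p)))) x)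
      (C * jap t ^ (-(3 : ℝ) / 2) * N) := by
  rcases le_total |t| 1 with ht | ht
  · refine (small_time hN hp hp' s).mono_const ?_
    have h1 : jap t ^ (-(2 : ℝ)) ≤ jap t ^ (-(3 : ℝ) / 2) :=
      Real.rpow_le_rpow_of_exponent_le (one_le_jap t) (by norm_num)
    rw [jap_rpow] at h1
    have h2 : (1 / 2 : ℝ) ≤ (1 + t ^ 2)⁻¹ := by
      rw [one_div]
      apply inv_anti₀ (by positivity)
      have := sq_abs t
      nlinarith [abs_nonneg t]
    have h3 : 2 ≤ C * jap t ^ (-(3 : ℝ) / 2) := by nlinarith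
    gcongr
  · have htp : 0 < |t| := by linarith
    set e := (Real.sqrt |t|)⁻¹ with he
    have hsq : 1 ≤ Real.sqrt |t| := Real.one_le_sqrt.2 ht
    have hep : 0 < e := by positivity
    have he1 : e ≤ 1 := inv_le_one_of_one_le₀ hsq
    have hes : e ^ 2 * |s| = 1 := by
      rw [he, inv_pow, Real.sq_sqrt htp.le, hst, inv_mul_cancel₀ htp.ne']
    refine (large_time hN hp hp' hep he1 hes).mono_const ?_
    have h1 : e ^ 3 = |t| ^ (-(3 : ℝ) / 2) := by
      rw [he, Real.sqrt_eq_rpow, ← Real.rpow_neg htp.le, ← Real.rpow_natCast, ← Real.rpow_mul htp.le]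
      norm_num
    have h2 : e ^ 3 ≤ 4 * jap t ^ (-(3 : ℝ) / 2) := by
      have hj : jap t ≤ 2 * |t| := by linarith [jap_le t]
      have h3 : (2 * |t|) ^ (-(3 : ℝ) / 2) ≤ jap t ^ (-(3 : ℝ) / 2) :=
        Real.rpow_le_rpow_of_nonpos (jap_pos t) hj (by norm_num)
      rw [Real.mul_rpow (by norm_num) htp.le, ← h1] at h3
      have h4 : (1 / 4 : ℝ) ≤ 2 ^ (-(3 : ℝ) / 2) := by
        have : (2 : ℝ) ^ (-(2 : ℝ)) ≤ 2 ^ (-(3 : ℝ) / 2) :=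
          Real.rpow_le_rpow_of_exponent_le (by norm_num) (by norm_num)
        refine le_trans (le_of_eq ?_) this
        rw [Real.rpow_neg (by norm_num)]; norm_num
      have : 0 < e ^ 3 := by positivity
      nlinarith
    have hj3 : 0 ≤ jap t ^ (-(3 : ℝ) / 2) := Real.rpow_nonneg (jap_pos t).le _
    calc _ ≤ (4 * jap t ^ (-(3 : ℝ) / 2)) * (17 * (3 * Real.pi * Real.sqrt Real.pi + 5) * N) := by
          gcongr
      _ = (4 * (17 * (3 * Real.pi * Real.sqrt Real.pi + 5))) * jap t ^ (-(3 : ℝ) / 2) * N := by ring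
      _ ≤ _ := by gcongr

end KG

/-- Pointwise-in-time local decay with one derivative, `H¹ → L²`:
`‖⟨·⟩^{-2} ∂_x e^{±it⟨∇⟩} (⟨·⟩^{-2} f)‖_{L²} ≤ C ⟨t⟩^{-3/2} (‖f‖_{L²}² + ‖f'‖_{L²}²)^{1/2}`. -/
theorem local_decay_klein_gordon_derivative_H1 :
    ∃ C : ℝ, 1 ≤ C ∧
      ∀ σ : ℝ, (σ = 1 ∨ σ = -1) → ∀ (t : ℝ) (f : SchwartzMap ℝ ℂ),
        L2C (fun x => ((jap x ^ (-(2 : ℝ)) : ℝ) : ℂ) *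
            Mop (fun ξ => Complex.I * (ξ : ℂ) *
                Complex.exp (Complex.I * (σ : ℂ) * (t : ℂ) * (jap ξ : ℂ)))
              (fun z => ((jap z ^ (-(2 : ℝ)) : ℝ) : ℂ) * f z) x)
          ≤ C * jap t ^ (-(3 : ℝ) / 2) *
              Real.sqrt ((∫ x : ℝ, ‖f x‖ ^ 2) + ∫ x : ℝ, ‖deriv (fun z => f z) x‖ ^ 2) := by
  have hK : 0 ≤ 3 * Real.pi * Real.sqrt Real.pi := by positivity
  refine ⟨4 * (17 * (3 * Real.pi * Real.sqrt Real.pi + 5)), by linarith, ?_⟩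
  intro σ hσ t f
  set N := Real.sqrt ((∫ x : ℝ, ‖f x‖ ^ 2) + ∫ x : ℝ, ‖deriv (fun z => f z) x‖ ^ 2) with hN
  have hN0 : 0 ≤ N := Real.sqrt_nonneg _
  have i0 : 0 ≤ ∫ x : ℝ, ‖f x‖ ^ 2 := integral_nonneg fun x => by positivity
  have i1 : 0 ≤ ∫ x : ℝ, ‖deriv (fun z => f z) x‖ ^ 2 := integral_nonneg fun x => by positivity
  have hp : KG.BL (KG.refl f) N := by
    apply KG.BL_of_sqrt
    simp_rw [KG.refl_apply]
    rw [integral_neg_eq_self (fun x => ‖f x‖ ^ 2)]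
    exact Real.sqrt_le_sqrt (by linarith)
  have hp' : KG.BL (KG.dS (KG.refl f)) N := by
    apply KG.BL_of_sqrt
    simp_rw [KG.dS_refl, norm_neg]
    rw [integral_neg_eq_self (fun x => ‖KG.dS f x‖ ^ 2)]
    have e : ∀ x, KG.dS f x = deriv (fun z => f z) x := fun x => (KG.hasDerivAt_dS f x).deriv.symm
    simp_rw [e]
    exact Real.sqrt_le_sqrt (by linarith)
  have hst : |σ * t| = |t| := by
    rcases hσ with rfl | rfl <;> simp
  have hb := KG.final_bound (4 * (17 * (3 * Real.pi * Real.sqrt Real.pi + 5))) (by linarith) le_rfl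
    hN0 hp hp' (σ * t) t hst
  have hF : (fun x => ((jap x ^ (-(2 : ℝ)) : ℝ) : ℂ) *
            Mop (fun ξ => Complex.I * (ξ : ℂ) *
                Complex.exp (Complex.I * (σ : ℂ) * (t : ℂ) * (jap ξ : ℂ)))
              (fun z => ((jap z ^ (-(2 : ℝ)) : ℝ) : ℂ) * f z) x) =
      fun x => KG.wt x ^ 2 * KG.ifs (KG.mu KG.ix (KG.mu (KG.ph (σ * t))
        (KG.ifs (KG.mu KG.al (KG.refl f))))) x := by
    ext x
    rw [KG.ifs_apply, Mop]
    congr 1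
    · rw [KG.jap_rpow, KG.wt, ← KG.jap_sq]; push_cast; rw [inv_pow]
    · congr 1
      ext ξ
      rw [KG.FT_eq, KG.mu_apply KG.tg_ix', KG.mu_apply (KG.tg_ph _), KG.ix, KG.ph]
      push_cast
      ring_nf
  rw [hF, L2C]
  have hc : 0 ≤ 4 * (17 * (3 * Real.pi * Real.sqrt Real.pi + 5)) * jap t ^ (-(3 : ℝ) / 2) * N := by
    have := Real.rpow_nonneg (KG.jap_pos t).le (-(3 : ℝ) / 2)
    positivity
  apply Real.sqrt_le_iff.2 ⟨hc, ?_⟩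
  exact hb.sq hc ((KG.continuous_wt.pow 2).mul (KG.ifs _).continuous).aestronglyMeasurable
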